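/- Let r ∈ ℝ with 0 ≤ r ≤ 1 and a, a', b, c ∈ ℝ. Let Ψ ∈ EuclideanSpace ℂ (Fin 2 × Fin 2) have components Ψ_{(0,0)} = √(1−r), Ψ_{(1,1)} = √r, and Ψ_{(0,1)} = Ψ_{(1,0)} = 0. Let U₁ = !![exp(i a), 0; 0, exp(−i a)] ∈ Matrix (Fin 2) (Fin 2) ℂ, and let U ∈ Matrix (Fin 2 × Fin 2) (Fin 2 × Fin 2) ℂ have entries U_{(0,0),(0,0)} = exp(i a'), U_{(0,1),(1,0)} = exp(i b), U_{(1,0),(0,1)} = exp(i b), U_{(1,1),(1,1)} = exp(i c), and 0 elsewhere. Let M be the matrix of the outer product |Ψ⟩⟨Ψ|. Then the partial trace over the second (environment) factor of U * (U₁ ⊗ₖ I₂) * M * (U₁ᴴ ⊗ₖ I₂) * Uᴴ equals !![(1−r : ℂ), 0; 0, (r : ℂ)]. -/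

import Mathlib

open Kronecker Matrix

/-!
In the computational basis `|Ψ⟩` is a Schmidt decomposition `∑ i, ψ i |ii⟩`, so it only meets the
columns of `U (U₁ ⊗ I)` indexed by `(i, i)`; there both factors act by phases, and the exchange of
`|01⟩` and `|10⟩` is never felt. The encoded state is therefore pure, with Schmidt coefficients of
unchanged modulus, and its reduced state is the diagonal matrix of the squared moduli `|ψ i|²`.

The vector `∑ i, ψ i |ii⟩` is written `vec (diagonal ψ)`.
-/

/-- The partial trace of a matrix on a tensor product over the second factor, taking the state of
a probe and its environment to the reduced state of the probe. -/
def traceRight {m n R : Type*} [AddCommMonoid R] [Fintype n] (M : Matrix (m × n) (m × n) R) :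
    Matrix m m R :=
  of fun s t => ∑ k, M (s, k) (t, k)

theorem mul_star_mul_of_mem_unitary {R : Type*} [CommMonoid R] [StarMul R] {u : R}
    (hu : u ∈ unitary R) (x : R) : (u * x) * star (u * x) = x * star x := by
  rw [star_mul', mul_mul_mul_comm, Unitary.mul_star_self_of_mem hu, one_mul]

theorem exp_I_mul_ofReal_mem_unitary (x : ℝ) :
    Complex.exp (Complex.I * x) ∈ unitary ℂ := by
  simp [Unitary.mem_iff_star_mul_self, ← Complex.exp_conj, ← Complex.exp_add]

section PureState

variable {l m n R : Type*}

theorem traceRight_vecMulVec_vec [NonUnitalNonAssocSemiring R] [Fintype n] (A B : Matrix n m R) :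
    traceRight (vecMulVec (vec A) (vec B)) = Aᵀ * B :=
  rfl

theorem mul_vecMulVec_star_mul_conjTranspose [NonUnitalSemiring R] [StarRing R] [Fintype m]
    (A : Matrix l m R) (v : m → R) :
    A * vecMulVec v (star v) * Aᴴ = vecMulVec (A *ᵥ v) (star (A *ᵥ v)) := by
  rw [mul_vecMulVec, vecMulVec_mul, star_mulVec]

end PureState

section SchmidtVector

variable {n R : Type*} [DecidableEq n] [Fintype n]

theorem traceRight_vecMulVec_vec_diagonal_star [NonUnitalNonAssocSemiring R] [StarRing R]
    (ψ : n → R) :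
    traceRight (vecMulVec (vec (diagonal ψ)) (star (vec (diagonal ψ)))) =
      diagonal fun i => ψ i * star (ψ i) := by
  rw [star_vec, traceRight_vecMulVec_vec, diagonal_map (star_zero R), diagonal_transpose,
    diagonal_mul_diagonal]

theorem vec_diagonal_eq_sum_single [AddCommMonoid R] (ψ : n → R) :
    vec (diagonal ψ) = ∑ i, Pi.single (i, i) (ψ i) := by
  ext ⟨i, j⟩
  obtain rfl | hij := eq_or_ne i j
  · simp [Pi.single_apply]
  · simp [Pi.single_apply, ite_and, hij.symm]

theorem mulVec_vec_diagonal [Semiring R] {U : Matrix (n × n) (n × n) R} {ω : n → R}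
    (hU : ∀ i, U.col (i, i) = Pi.single (i, i) (ω i)) (ψ : n → R) :
    U *ᵥ vec (diagonal ψ) = vec (diagonal fun i => ω i * ψ i) := by
  simp only [vec_diagonal_eq_sum_single, mulVec_sum, mulVec_single, hU,
    ← Pi.single_smul, op_smul_eq_mul]

variable [CommSemiring R]

theorem diagonal_kronecker_one_mulVec_vec_diagonal (u ψ : n → R) :
    (diagonal u ⊗ₖ (1 : Matrix n n R)) *ᵥ vec (diagonal ψ) =
      vec (diagonal fun i => u i * ψ i) := by
  simp only [kronecker_mulVec_vec, Matrix.one_mul, diagonal_transpose, diagonal_mul_diagonal,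
    mul_comm]

theorem stmt_18_general [StarRing R] {u ω : n → R} (hu : ∀ i, u i ∈ unitary R)
    (hω : ∀ i, ω i ∈ unitary R) {U : Matrix (n × n) (n × n) R}
    (hU : ∀ i, U.col (i, i) = Pi.single (i, i) (ω i)) (ψ : n → R) :
    traceRight (U * (diagonal u ⊗ₖ (1 : Matrix n n R)) *
        vecMulVec (vec (diagonal ψ)) (star (vec (diagonal ψ))) *
        ((diagonal u)ᴴ ⊗ₖ (1 : Matrix n n R)) * Uᴴ) =
      diagonal fun i => ψ i * star (ψ i) := by
  let A := U * (diagonal u ⊗ₖ (1 : Matrix n n R))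
  have hA : A *ᵥ vec (diagonal ψ) = vec (diagonal fun i => ω i * (u i * ψ i)) := by
    rw [← mulVec_mulVec, diagonal_kronecker_one_mulVec_vec_diagonal, mulVec_vec_diagonal hU]
  have hAstar : ((diagonal u)ᴴ ⊗ₖ (1 : Matrix n n R)) * Uᴴ = Aᴴ := by
    rw [conjTranspose_mul, conjTranspose_kronecker, conjTranspose_one]
  rw [Matrix.mul_assoc _ _ Uᴴ, hAstar, mul_vecMulVec_star_mul_conjTranspose, hA,
    traceRight_vecMulVec_vec_diagonal_star]
  simp only [mul_star_mul_of_mem_unitary (hω _), mul_star_mul_of_mem_unitary (hu _)]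

end SchmidtVector

theorem ofReal_sqrt_mul_star {x : ℝ} (hx : 0 ≤ x) : (√x : ℂ) * star (√x : ℂ) = x := by
  simp [← Complex.ofReal_mul, Real.mul_self_sqrt hx]

/-- Under type-I NCPTP encoding with the purification
`|Ψ⟩ = √(1−r)|00⟩ + √r|11⟩`, a diagonal local probe unitary `U₁`, and the
phased-SWAP energy-conserving global unitary `U`, the encoded probe state (the
partial trace over the environment of `U (U₁⊗I) |Ψ⟩⟨Ψ| (U₁ᴴ⊗I) Uᴴ`) is exactly
the thermal state `diag(1−r, r)`. -/
theorem stmt_18 (r : ℝ) (hr0 : 0 ≤ r) (hr1 : r ≤ 1) (a a' b c : ℝ)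
    (Ψ : EuclideanSpace ℂ (Fin 2 × Fin 2))
    (hΨ00 : Ψ ((0 : Fin 2), (0 : Fin 2)) = (Real.sqrt (1 - r) : ℂ))
    (hΨ11 : Ψ ((1 : Fin 2), (1 : Fin 2)) = (Real.sqrt r : ℂ))
    (hΨ01 : Ψ ((0 : Fin 2), (1 : Fin 2)) = 0)
    (hΨ10 : Ψ ((1 : Fin 2), (0 : Fin 2)) = 0)
    (U₁ : Matrix (Fin 2) (Fin 2) ℂ)
    (hU₁ : U₁ = !![Complex.exp (Complex.I * a), 0; 0, Complex.exp (-(Complex.I * a))])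
    (U : Matrix (Fin 2 × Fin 2) (Fin 2 × Fin 2) ℂ)
    (hU : ∀ x y : Fin 2 × Fin 2, U x y =
      if x = ((0 : Fin 2), (0 : Fin 2)) ∧ y = ((0 : Fin 2), (0 : Fin 2)) then
        Complex.exp (Complex.I * a')
      else if x = ((0 : Fin 2), (1 : Fin 2)) ∧ y = ((1 : Fin 2), (0 : Fin 2)) then
        Complex.exp (Complex.I * b)
      else if x = ((1 : Fin 2), (0 : Fin 2)) ∧ y = ((0 : Fin 2), (1 : Fin 2)) then
        Complex.exp (Complex.I * b)
      else if x = ((1 : Fin 2), (1 : Fin 2)) ∧ y = ((1 : Fin 2), (1 : Fin 2)) then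
        Complex.exp (Complex.I * c)
      else 0)
    (M : Matrix (Fin 2 × Fin 2) (Fin 2 × Fin 2) ℂ)
    (hM : ∀ α β : Fin 2 × Fin 2, M α β = Ψ α * star (Ψ β)) :
    ∀ s t : Fin 2,
      ∑ k, (U * (U₁ ⊗ₖ (1 : Matrix (Fin 2) (Fin 2) ℂ)) * M *
          (U₁ᴴ ⊗ₖ (1 : Matrix (Fin 2) (Fin 2) ℂ)) * Uᴴ) (s, k) (t, k) =
        !![(1 - r : ℂ), 0; 0, (r : ℂ)] s t := by
  let ψ : Fin 2 → ℂ := fun i => √(![1 - r, r] i)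
  let u : Fin 2 → ℂ := fun i => Complex.exp (Complex.I * (![a, -a] i : ℝ))
  let ω : Fin 2 → ℂ := fun i => Complex.exp (Complex.I * (![a', c] i : ℝ))
  have hΨ : Ψ.ofLp = vec (diagonal ψ) := by
    ext ⟨i, j⟩
    fin_cases i <;> fin_cases j <;> simp [ψ, *]
  have hMΨ : M = vecMulVec (vec (diagonal ψ)) (star (vec (diagonal ψ))) := by
    rw [← hΨ]
    exact Matrix.ext hM
  have hU₁u : U₁ = diagonal u := by simp [hU₁, u, diagonal_fin_two]
  have hUω (i : Fin 2) : U.col (i, i) = Pi.single (i, i) (ω i) := by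
    ext x
    fin_cases i <;> fin_cases x <;> simp [hU, ω]
  have hp (i : Fin 2) : 0 ≤ ![1 - r, r] i := by fin_cases i <;> simp [hr0, hr1]
  have hψ : diagonal (fun i => ψ i * star (ψ i)) = !![(1 - r : ℂ), 0; 0, (r : ℂ)] := by
    simp only [ψ, ofReal_sqrt_mul_star (hp _)]
    simp [diagonal_fin_two]
  intro s t
  rw [hMΨ, hU₁u, ← hψ]
  exact congr_fun₂ (stmt_18_general (fun _ => exp_I_mul_ofReal_mem_unitary _)
    (fun _ => exp_I_mul_ofReal_mem_unitary _) hUω ψ) s t
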